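/- arXiv:1211.3056 — 6 statements merged into one kernel-verified Lean document; each statement's English description precedes it below -/
import Mathlib

section
/- Three-distance theorem: Let 0 < a < 1 be an irrational real number and let n ≥ 1. Write the n points {a·x mod 1 : 0 ≤ x < n} in increasing order as 0 = s₀ < s₁ < ⋯ < s_{n−1} < 1, and consider the n gap lengths s₁ − s₀, …, s_{n−1} − s_{n−2}, 1 − s_{n−1}. Then the set of distinct gap lengths has at most three elements, and if it has exactly three elements, the largest one equals the sum of the two others. -/
/-- The configuration of `n` points `{a·x mod 1 : 0 ≤ x < n}` on the unit segment. -/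
noncomputable def pts (a : ℝ) (n : ℕ) : Finset ℝ :=
  (Finset.range n).image fun x : ℕ => Int.fract (a * x)

/-- The length of the gap of the configuration of `n` points whose left endpoint is `s`:
the distance from `s` to the next point of the configuration to its right,
or to `1` if `s` is the largest point. -/
noncomputable def gapAt (a : ℝ) (n : ℕ) (s : ℝ) : ℝ :=
  sInf {d : ℝ | 0 < d ∧ (s + d = 1 ∨ s + d ∈ pts a n)}

lemma gap_mem (a : ℝ) (n x : ℕ) :
    gapAt a n (Int.fract (a * x)) ∈ {d : ℝ | 0 < d ∧
      (Int.fract (a * x) + d = 1 ∨ Int.fract (a * x) + d ∈ pts a n)} := by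
  unfold gapAt
  apply Set.Nonempty.csInf_mem
  · exact ⟨1 - Int.fract (a * x), by linarith [Int.fract_lt_one (a * x)], Or.inl (by ring)⟩
  · apply Set.Finite.subset (((pts a n ∪ {1}).image (fun y => y - Int.fract (a * x))).finite_toSet)
    rintro d ⟨_, h⟩
    simp only [Finset.coe_image, Set.mem_image, Finset.mem_coe, Finset.mem_union,
      Finset.mem_singleton]
    exact ⟨Int.fract (a * x) + d, h.symm, by ring⟩

lemma gap_exists (a : ℝ) (n x : ℕ) (hn : 1 ≤ n) :
    ∃ m k : ℤ, 0 ≤ x + m ∧ x + m < n ∧ gapAt a n (Int.fract (a * x)) = a * m - k := by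
  obtain ⟨_, h⟩ := gap_mem a n x
  rcases h with h | h
  · refine ⟨-x, -1 - ⌊a * x⌋, by omega, by omega, ?_⟩
    have := Int.self_sub_floor (a * x)
    push_cast
    linarith
  · unfold pts at h
    obtain ⟨y, hy, hyx⟩ := Finset.mem_image.1 h
    rw [Finset.mem_range] at hy
    refine ⟨y - x, ⌊a * y⌋ - ⌊a * x⌋, by omega, by omega, ?_⟩
    have h1 := Int.self_sub_floor (a * x)
    have h2 := Int.self_sub_floor (a * y)
    push_cast
    linarith

lemma gap_le (a : ℝ) (n x : ℕ) (m k : ℤ) (h0 : 0 ≤ x + m) (h1 : x + m < n)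
    (hd : 0 < a * m - k) : gapAt a n (Int.fract (a * x)) ≤ a * m - k := by
  have hb : BddBelow {d : ℝ | 0 < d ∧
      (Int.fract (a * x) + d = 1 ∨ Int.fract (a * x) + d ∈ pts a n)} :=
    ⟨0, fun d hd => hd.1.le⟩
  by_cases hs : 1 ≤ Int.fract (a * x) + (a * m - k)
  · have : gapAt a n (Int.fract (a * x)) ≤ 1 - Int.fract (a * x) :=
      csInf_le hb ⟨by linarith [Int.fract_lt_one (a * x)], Or.inl (by ring)⟩
    linarith
  · push Not at hs
    refine csInf_le hb ⟨hd, Or.inr ?_⟩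
    obtain ⟨y, hy⟩ := Int.eq_ofNat_of_zero_le h0
    unfold pts
    refine Finset.mem_image.2 ⟨y, Finset.mem_range.2 (by omega), ?_⟩
    rw [Int.fract_eq_iff]
    refine ⟨by linarith [Int.fract_nonneg (a * x)], hs, ⌊a * x⌋ + k, ?_⟩
    have hyr : (x : ℝ) + m = y := by exact_mod_cast hy
    rw [← hyr]
    have := Int.self_sub_floor (a * x)
    push_cast
    linarith

lemma gap_three (a : ℝ) (hirr : Irrational a) (n : ℕ) (hn : 2 ≤ n) :
    ∃ α β : ℝ, 0 < α ∧ 0 < β ∧ ∀ x : ℕ, x < n →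
      gapAt a n (Int.fract (a * x)) = α ∨ gapAt a n (Int.fract (a * x)) = β ∨
      gapAt a n (Int.fract (a * x)) = α + β := by
  have hne : (Finset.Ico 1 n).Nonempty := ⟨1, by simp; omega⟩
  obtain ⟨p, hp, hpm⟩ := Finset.exists_min_image (Finset.Ico 1 n)
    (fun i : ℕ => Int.fract (a * i)) hne
  obtain ⟨q, hq, hqm⟩ := Finset.exists_max_image (Finset.Ico 1 n)
    (fun i : ℕ => Int.fract (a * i)) hne
  rw [Finset.mem_Ico] at hp hq
  obtain ⟨P, hP⟩ : ∃ P : ℤ, Int.fract (a * p) = a * p - P := ⟨_, rfl⟩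
  obtain ⟨Q, hQ⟩ : ∃ Q : ℤ, Int.fract (a * q) = a * q - Q := ⟨_, rfl⟩
  have hα0 : 0 < Int.fract (a * p) := by
    rw [Int.fract_pos]
    exact (hirr.mul_natCast (by omega)).ne_int _
  have hα1 := Int.fract_lt_one (a * p)
  have hβ0 := Int.fract_lt_one (a * q)
  have hβ1 := Int.fract_nonneg (a * q)
  -- lower bounds
  have lp : ∀ m k : ℤ, 0 < m → m < n → 0 < a * m - k → Int.fract (a * p) ≤ a * m - k := by
    intro m k h1 h2 h3
    by_contra hc
    push Not at hc
    obtain ⟨y, rfl⟩ := Int.eq_ofNat_of_zero_le h1.le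
    have := hpm y (by rw [Finset.mem_Ico]; omega)
    have h4 : Int.fract (a * y) = a * ((y : ℤ) : ℝ) - k := by
      rw [Int.fract_eq_iff]
      exact ⟨h3.le, by linarith, k, by push_cast; ring⟩
    linarith
  have lm : ∀ m k : ℤ, m < 0 → -m < n → 0 < a * m - k → 1 - Int.fract (a * q) ≤ a * m - k := by
    intro m k h1 h2 h3
    by_contra hc
    push Not at hc
    obtain ⟨y, hy⟩ := Int.eq_ofNat_of_zero_le (show 0 ≤ -m by omega)
    have := hqm y (by rw [Finset.mem_Ico]; omega)
    have hyr : (m : ℝ) = -y := by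
      have : m = -(y : ℤ) := by omega
      rw [this]; push_cast; ring
    have h4 : Int.fract (a * y) = 1 - (a * m - k) := by
      rw [Int.fract_eq_iff]
      exact ⟨by linarith, by linarith, -k - 1, by rw [hyr]; push_cast; ring⟩
    linarith
  generalize Int.fract (a * p) = α at *
  obtain ⟨β, hβ⟩ : ∃ β, β = 1 - Int.fract (a * q) := ⟨_, rfl⟩
  rw [← hβ] at lm
  rw [hQ] at hβ hβ0 hβ1
  have hβp : 0 < β := by linarith
  refine ⟨α, β, hα0, hβp, ?_⟩
  intro x hx
  obtain ⟨m, k, h0, h1, hd⟩ := gap_exists a n x (by omega)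
  have hdpos := (gap_mem a n x).1
  have hle := gap_le a n x
  generalize gapAt a n (Int.fract (a * x)) = d at *
  have A : x + p < n → d ≤ α := by
    intro h
    have := hle p P (by omega) (by omega) (by push_cast; linarith)
    push_cast at this; linarith
  have B : q ≤ x → d ≤ β := by
    intro h
    have := hle (-q) (-1 - Q) (by omega) (by omega) (by push_cast; linarith)
    push_cast at this; linarith
  have C : n ≤ x + p → x < q → d ≤ α + β := by
    intro h h'
    have := hle (p - q) (P - 1 - Q) (by omega) (by omega) (by push_cast; linarith)
    push_cast at this; linarith
  have D1 : 0 < m → α ≤ d := fun h => hd ▸ lp m k h (by omega) (hd ▸ hdpos)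
  have D2 : m < 0 → β ≤ d := fun h => hd ▸ lm m k h (by omega) (hd ▸ hdpos)
  have D3 : m = 0 → 1 ≤ d := by
    intro h
    subst h
    have : d = ((-k : ℤ) : ℝ) := by rw [hd]; push_cast; ring
    rw [this] at hdpos ⊢
    have h2 : 0 < -k := by exact_mod_cast hdpos
    exact_mod_cast h2
  -- second differences
  have F1 : α < d → 0 ≤ m → m < p → α + β ≤ d := by
    intro h h2 h3
    have := lm (m - p) (k - P) (by omega) (by omega) (by push_cast; linarith)
    push_cast at this; linarith
  have F2 : β < d → m < 0 → -m < q → α + β ≤ d := by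
    intro h h2 h3
    have := lp (m + q) (k + Q + 1) (by omega) (by omega) (by push_cast; linarith)
    push_cast at this; linarith
  by_cases c1 : x + p < n
  · have hA := A c1
    rcases lt_trichotomy m 0 with hm | hm | hm
    · have := D2 hm
      right; left
      by_cases c2 : q ≤ x
      · exact le_antisymm (B c2) this
      · by_contra hc
        have := F2 (lt_of_le_of_ne this (Ne.symm hc)) hm (by omega)
        linarith
    · have := D3 hm; linarith
    · exact Or.inl (le_antisymm hA (D1 hm))
  · by_cases c2 : q ≤ x
    · have hB := B c2
      rcases lt_trichotomy m 0 with hm | hm | hm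
      · exact Or.inr (Or.inl (le_antisymm hB (D2 hm)))
      · have h3 := D3 hm
        have := F1 (by linarith) hm.ge (by omega)
        linarith
      · left
        by_contra hc
        have := F1 (lt_of_le_of_ne (D1 hm) (Ne.symm hc)) hm.le (by omega)
        linarith
    · have hC := C (by omega) (by omega)
      rcases lt_trichotomy m 0 with hm | hm | hm
      · by_cases hc : d = β
        · exact Or.inr (Or.inl hc)
        · exact Or.inr (Or.inr (le_antisymm hC
            (F2 (lt_of_le_of_ne (D2 hm) (Ne.symm hc)) hm (by omega))))
      · have h3 := D3 hm
        exact Or.inr (Or.inr (le_antisymm hC (F1 (by linarith) hm.ge (by omega))))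
      · by_cases hc : d = α
        · exact Or.inl hc
        · exact Or.inr (Or.inr (le_antisymm hC
            (F1 (lt_of_le_of_ne (D1 hm) (Ne.symm hc)) hm.le (by omega))))

/-- **Three-distance theorem.** For `0 < a < 1` irrational and `n ≥ 1`, the set of distinct
gap lengths of the configuration `{a·x mod 1 : 0 ≤ x < n}` has at most three elements, and if
it has exactly three elements then the largest one is the sum of the two others. -/
theorem three_distance_theorem (a : ℝ) (ha0 : 0 < a) (ha1 : a < 1) (hirr : Irrational a)
    (n : ℕ) (hn : 1 ≤ n) :
    ((pts a n).image (gapAt a n)).card ≤ 3 ∧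
    (((pts a n).image (gapAt a n)).card = 3 →
      ∃ g₁ g₂ g₃ : ℝ, g₁ < g₂ ∧ g₂ < g₃ ∧
        (pts a n).image (gapAt a n) = {g₁, g₂, g₃} ∧ g₃ = g₁ + g₂) := by
  rcases Nat.lt_or_ge n 2 with h2 | h2
  · have hc : ((pts a n).image (gapAt a n)).card ≤ 1 := by
      refine Finset.card_image_le.trans ?_
      unfold pts
      refine Finset.card_image_le.trans ?_
      rw [Finset.card_range]; omega
    exact ⟨by omega, fun h => by omega⟩
  · obtain ⟨α, β, hα, hβ, h⟩ := gap_three a hirr n h2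
    have hsub : (pts a n).image (gapAt a n) ⊆ {α, β, α + β} := by
      intro g hg
      obtain ⟨s, hs, rfl⟩ := Finset.mem_image.1 hg
      unfold pts at hs
      obtain ⟨x, hx, rfl⟩ := Finset.mem_image.1 hs
      simpa using h x (Finset.mem_range.1 hx)
    have h3 : ({α, β, α + β} : Finset ℝ).card ≤ 3 := Finset.card_le_three
    refine ⟨(Finset.card_le_card hsub).trans h3, fun hc => ?_⟩
    have heq := Finset.eq_of_subset_of_card_le hsub (by omega)
    rcases lt_trichotomy α β with hab | hab | hab
    · exact ⟨α, β, α + β, hab, by linarith, heq, rfl⟩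
    · exfalso
      rw [heq, hab] at hc
      have : ({β, β, β + β} : Finset ℝ).card ≤ 2 := by
        rw [Finset.insert_eq_of_mem (by simp)]
        exact Finset.card_le_two
      omega
    · refine ⟨β, α, α + β, hab, by linarith, ?_, by ring⟩
      rw [heq, Finset.insert_comm]
end

section
/- Quantitative three-distance theorem: for every i ≥ 0, every t with 0 ≤ t < k_{i+1}, and every s with 0 ≤ s < q_i, setting n = q_i + q_{i−1,t} + s, the multiset of the n gap lengths of the configuration of n points consists of exactly q_i − s copies of θ_{i−1,t}, exactly s copies of θ_{i−1,t+1}, and exactly q_{i−1,t} + s copies of θ_i. -/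
/-- The multiset of the `n` gap lengths of the configuration of `n` points. -/
noncomputable def gaps (a : ℝ) (n : ℕ) : Multiset ℝ :=
  (pts a n).val.map (gapAt a n)

lemma fract_inj (a : ℝ) (hirr : Irrational a) (x y : ℕ)
    (h : Int.fract (a * x) = Int.fract (a * y)) : x = y := by
  by_contra hne
  obtain ⟨z, hz⟩ := Int.fract_eq_fract.1 h
  have hne' : ((x : ℤ) - y) ≠ 0 := by omega
  have hi := hirr.mul_intCast hne'
  apply hi.ne_int z
  push_cast
  linarith

lemma gaps_core (a : ℝ) (hirr : Irrational a) (n : ℕ) (d : ℕ → ℝ)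
    (hd : ∀ x < n, 0 < d x ∧ ∃ y < n, ∃ z : ℤ, a * x + d x = a * y + z)
    (hsum : ∑ x ∈ Finset.range n, d x = 1) :
    gaps a n = (Multiset.range n).map d := by
  have hn : 0 < n := by
    rcases Nat.eq_zero_or_pos n with h | h
    · subst h; simp at hsum
    · exact h
  have hinj : Set.InjOn (fun x : ℕ => Int.fract (a * x)) (Finset.range n) :=
    fun x _ y _ h => fract_inj a hirr x y h
  have h0 : (0 : ℝ) ∈ pts a n := by
    unfold pts
    exact Finset.mem_image.2 ⟨0, by simpa using hn, by simp⟩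
  have hp01 : ∀ p ∈ pts a n, 0 ≤ p ∧ p < 1 := by
    intro p hp
    obtain ⟨x, _, rfl⟩ := Finset.mem_image.1 hp
    exact ⟨Int.fract_nonneg _, Int.fract_lt_one _⟩
  have hbdd : ∀ p, BddBelow {e : ℝ | 0 < e ∧ (p + e = 1 ∨ p + e ∈ pts a n)} :=
    fun p => ⟨0, fun e he => he.1.le⟩
  have hne : ∀ p ∈ pts a n, (1 - p) ∈ {e : ℝ | 0 < e ∧ (p + e = 1 ∨ p + e ∈ pts a n)} := by
    intro p hp
    exact ⟨by linarith [(hp01 p hp).2], Or.inl (by ring)⟩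
  have hgnn : ∀ p ∈ pts a n, 0 ≤ gapAt a n p := by
    intro p hp
    exact le_csInf ⟨_, hne p hp⟩ (fun e he => he.1.le)
  -- the gap is at most `d`
  have hle : ∀ x ∈ Finset.range n, gapAt a n (Int.fract (a * x)) ≤ d x := by
    intro x hx
    obtain ⟨hpos, y, hy, z, hz⟩ := hd x (Finset.mem_range.1 hx)
    have hxm : Int.fract (a * x) ∈ pts a n := Finset.mem_image.2 ⟨x, hx, rfl⟩
    have hym : Int.fract (a * y) ∈ pts a n :=
      Finset.mem_image.2 ⟨y, Finset.mem_range.2 hy, rfl⟩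
    have e1 := Int.floor_add_fract (a * (x : ℝ))
    have e2 := Int.floor_add_fract (a * (y : ℝ))
    obtain ⟨w, hw⟩ : ∃ w : ℤ, Int.fract (a * x) + d x = Int.fract (a * y) + w :=
      ⟨z + ⌊a * (y : ℝ)⌋ - ⌊a * (x : ℝ)⌋, by push_cast; linarith⟩
    have b1 := hp01 _ hxm
    have b2 := hp01 _ hym
    rcases lt_trichotomy w 0 with h | h | h
    · have : (w : ℝ) ≤ -1 := by exact_mod_cast (by omega : w ≤ -1)
      linarith
    · subst h
      refine csInf_le (hbdd _) ⟨hpos, Or.inr ?_⟩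
      rw [hw]; simpa using hym
    · have : (1 : ℝ) ≤ w := by exact_mod_cast (by omega : (1 : ℤ) ≤ w)
      refine (csInf_le (hbdd _) (hne _ hxm)).trans ?_
      linarith
  -- the gaps cover the unit segment
  have hcov : Set.Ico (0 : ℝ) 1 ⊆ ⋃ p ∈ pts a n, Set.Icc p (p + gapAt a n p) := by
    intro y hy
    obtain ⟨p, hp, hmax⟩ := Finset.exists_max_image ((pts a n).filter (· ≤ y)) id
      ⟨0, Finset.mem_filter.2 ⟨h0, hy.1⟩⟩
    obtain ⟨hp1, hp2⟩ := Finset.mem_filter.1 hp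
    refine Set.mem_iUnion₂.2 ⟨p, hp1, hp2, ?_⟩
    have : y - p ≤ gapAt a n p := by
      refine le_csInf ⟨_, hne p hp1⟩ ?_
      rintro e ⟨he, h | h⟩
      · linarith [hy.2]
      · by_contra hlt
        have := hmax (p + e) (Finset.mem_filter.2 ⟨h, by linarith⟩)
        simp only [id] at this
        linarith
    linarith
  have hge : 1 ≤ ∑ p ∈ pts a n, gapAt a n p := by
    have h1 := (MeasureTheory.measure_mono (μ := MeasureTheory.volume) hcov).trans
      (MeasureTheory.measure_biUnion_finset_le _ _)
    simp only [Real.volume_Ico, Real.volume_Icc, add_sub_cancel_left, sub_zero] at h1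
    rw [← ENNReal.ofReal_sum_of_nonneg hgnn] at h1
    exact (ENNReal.ofReal_le_ofReal_iff (Finset.sum_nonneg hgnn)).1 h1
  have hsum2 : ∑ p ∈ pts a n, gapAt a n p
      = ∑ x ∈ Finset.range n, gapAt a n (Int.fract (a * x)) := by
    unfold pts
    exact Finset.sum_image hinj
  have heq : ∀ x ∈ Finset.range n, gapAt a n (Int.fract (a * x)) = d x := by
    refine (Finset.sum_eq_sum_iff_of_le hle).1 (le_antisymm (Finset.sum_le_sum hle) ?_)
    rw [hsum, ← hsum2]; exact hge
  have hval : (pts a n).val = (Multiset.range n).map (fun x : ℕ => Int.fract (a * x)) := by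
    unfold pts
    rw [Finset.image_val_of_injOn hinj]; rfl
  unfold gaps
  rw [hval, Multiset.map_map]
  refine Multiset.map_congr rfl ?_
  intro x hx
  exact heq x hx

lemma map_three (A B C : ℕ) (u v w : ℝ) :
    (Multiset.range (A + B + C)).map (fun x => if x < A then u else if x < A + B then v else w) =
      Multiset.replicate A u + Multiset.replicate B v + Multiset.replicate C w := by
  rw [Multiset.range_add, Multiset.range_add, Multiset.map_add, Multiset.map_add,
    Multiset.map_map, Multiset.map_map]
  congr 1
  · congr 1
    · refine Multiset.eq_replicate.2 ⟨by simp, fun b hb => ?_⟩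
      obtain ⟨x, hx, rfl⟩ := Multiset.mem_map.1 hb
      rw [if_pos (Multiset.mem_range.1 hx)]
    · refine Multiset.eq_replicate.2 ⟨by simp, fun b hb => ?_⟩
      obtain ⟨x, hx, rfl⟩ := Multiset.mem_map.1 hb
      have := Multiset.mem_range.1 hx
      simp only [Function.comp]
      rw [if_neg (by omega), if_pos (by omega)]
  · refine Multiset.eq_replicate.2 ⟨by simp, fun b hb => ?_⟩
    obtain ⟨x, hx, rfl⟩ := Multiset.mem_map.1 hb
    simp only [Function.comp]
    rw [if_neg (by omega), if_neg (by omega)]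

lemma gaps_three (a : ℝ) (hirr : Irrational a) (A B C : ℕ) (u v w : ℝ)
    (h : A * u + B * v + C * w = 1)
    (hu : 0 < u) (hv : 0 < v) (hw : 0 < w)
    (h1 : ∀ x < A, ∃ y < A + B + C, ∃ z : ℤ, a * x + u = a * (y : ℕ) + z)
    (h2 : ∀ x, A ≤ x → x < A + B → ∃ y < A + B + C, ∃ z : ℤ, a * x + v = a * (y : ℕ) + z)
    (h3 : ∀ x, A + B ≤ x → x < A + B + C →
      ∃ y < A + B + C, ∃ z : ℤ, a * x + w = a * (y : ℕ) + z) :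
    gaps a (A + B + C) =
      Multiset.replicate A u + Multiset.replicate B v + Multiset.replicate C w := by
  rw [← map_three]
  apply gaps_core a hirr
  · intro x hx
    split_ifs with c1 c2
    · exact ⟨hu, h1 x c1⟩
    · exact ⟨hv, h2 x (by omega) c2⟩
    · exact ⟨hw, h3 x (by omega) hx⟩
  · have := congrArg Multiset.sum (map_three A B C u v w)
    simp only [Multiset.sum_add, Multiset.sum_replicate, nsmul_eq_mul] at this
    rw [h] at this
    exact this

/-- **Quantitative three-distance theorem.**
Indexing is shifted by one: `θ (m+1)`, `q (m+1)` denote the mathematical `θ_m`, `q_m`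
(so `θ 0 = θ₋₁ = 1`, `θ 1 = θ₀ = a`, `q 0 = q₋₁ = 0`, `q 1 = q₀ = 1`), and `k (i+1) = k_{i+1}`.
For `i ≥ 0`, `0 ≤ t < k_{i+1}` and `0 ≤ s < q_i`, with `n = q_i + q_{i-1,t} + s`, the multiset
of the `n` gap lengths consists of `q_i - s` copies of `θ_{i-1,t}`, `s` copies of
`θ_{i-1,t+1}` and `q_{i-1,t} + s` copies of `θ_i`. -/
theorem quantitative_three_distance (a : ℝ) (ha0 : 0 < a) (ha1 : a < 1) (hirr : Irrational a)
    (θ : ℕ → ℝ) (q k : ℕ → ℕ)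
    (hθ0 : θ 0 = 1) (hθ1 : θ 1 = a)
    (hq0 : q 0 = 0) (hq1 : q 1 = 1)
    (hk : ∀ i, (k (i + 1) : ℤ) = ⌊θ i / θ (i + 1)⌋)
    (hθrec : ∀ i, θ (i + 2) = θ i - (k (i + 1) : ℝ) * θ (i + 1))
    (hqrec : ∀ i, q (i + 2) = q i + k (i + 1) * q (i + 1))
    (i t s : ℕ) (ht : t < k (i + 1)) (hs : s < q (i + 1)) :
    gaps a (q (i + 1) + (q i + t * q (i + 1)) + s) =
      Multiset.replicate (q (i + 1) - s) (θ i - (t : ℝ) * θ (i + 1)) +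
      Multiset.replicate s (θ i - ((t : ℝ) + 1) * θ (i + 1)) +
      Multiset.replicate (q i + t * q (i + 1) + s) (θ (i + 1)) := by
  have inv : ∀ i, 0 < θ (i + 1) ∧ (q (i + 1) : ℝ) * θ i + q i * θ (i + 1) = 1 ∧
      ∃ e : ℝ, (e = 1 ∨ e = -1) ∧ ∃ p p' : ℤ, a * q i - p = -e * θ i ∧
        a * q (i + 1) - p' = e * θ (i + 1) := by
    intro i
    induction i with
    | zero =>
      refine ⟨by simpa [hθ1] using ha0, by simp [hθ0, hq0, hq1], 1, Or.inl rfl, 1, 0, ?_, ?_⟩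
      · simp [hθ0, hq0]
      · simp [hθ1, hq1]
    | succ i ih =>
      obtain ⟨hpos, hdet, e, he, p, p', h1, h2⟩ := ih
      have hk' : (k (i + 1) : ℝ) ≤ θ i / θ (i + 1) := by
        have := Int.floor_le (θ i / θ (i + 1))
        rw [← hk i] at this
        exact_mod_cast this
      rw [le_div_iff₀ hpos] at hk'
      have hq2 : (q (i + 2) : ℝ) = q i + k (i + 1) * q (i + 1) := by
        rw [hqrec i]; push_cast; ring
      have hdet' : (q (i + 2) : ℝ) * θ (i + 1) + q (i + 1) * θ (i + 2) = 1 := by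
        rw [hq2, hθrec i, ← hdet]; ring
      have hlin : a * q (i + 2) - ((p + k (i + 1) * p' : ℤ) : ℝ) = -e * θ (i + 2) := by
        rw [hq2, hθrec i]; push_cast
        linear_combination h1 + (k (i + 1) : ℝ) * h2
      refine ⟨?_, hdet', -e, ?_, p', p + k (i + 1) * p', ?_, ?_⟩
      · have hnn : 0 ≤ θ (i + 2) := by rw [hθrec i]; linarith
        rcases hnn.lt_or_eq with h | h
        · exact h
        · exfalso
          rw [← h] at hdet' hlin
          have hq0 : q (i + 2) ≠ 0 := by
            intro h0
            rw [h0] at hdet'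
            simp at hdet'
          apply (hirr.mul_natCast hq0).ne_int (p + k (i + 1) * p')
          linarith
      · rcases he with he | he
        · right; rw [he]
        · left; rw [he]; norm_num
      · linarith
      · exact hlin
  obtain ⟨hpos, hdet, e, he, p, p', h1, h2⟩ := inv i
  have hpos2 : 0 < θ (i + 2) := (inv (i + 1)).1
  rw [hθrec i] at hpos2
  have htk : ((t : ℝ) + 1) ≤ k (i + 1) := by exact_mod_cast ht
  have hw : 0 < θ i - ((t : ℝ) + 1) * θ (i + 1) := by nlinarith
  have hv : 0 < θ i - (t : ℝ) * θ (i + 1) := by linarith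
  obtain ⟨Q', hQ'⟩ : ∃ Q', Q' = q i + t * q (i + 1) := ⟨_, rfl⟩
  have hQr : (Q' : ℝ) = q i + t * q (i + 1) := by rw [hQ']; push_cast; ring
  rw [← hQ']
  have hqs : ((q (i + 1) - s : ℕ) : ℝ) = q (i + 1) - s := Nat.cast_sub hs.le
  rcases he with rfl | rfl
  · have hn : q (i + 1) + Q' + s = (Q' + s) + (q (i + 1) - s) + s := by omega
    rw [hn, gaps_three a hirr (Q' + s) (q (i + 1) - s) s (θ (i + 1)) _ _ ?_ hpos hv hw ?_ ?_ ?_]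
    · abel
    · rw [hqs]; push_cast; rw [hQr]; linear_combination hdet
    · intro x hx
      refine ⟨x + q (i + 1), by omega, -p', ?_⟩
      push_cast
      linear_combination -h2
    · intro x hx hx'
      refine ⟨x - Q', by omega, p + t * p', ?_⟩
      rw [Nat.cast_sub (by omega), hQr]
      push_cast
      linear_combination h1 + (t : ℝ) * h2
    · intro x hx hx'
      refine ⟨x - (Q' + q (i + 1)), by omega, p + t * p' + p', ?_⟩
      rw [Nat.cast_sub (by omega)]
      push_cast
      rw [hQr]
      linear_combination h1 + ((t : ℝ) + 1) * h2
  · have hn : q (i + 1) + Q' + s = s + (q (i + 1) - s) + (Q' + s) := by omega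
    rw [hn, gaps_three a hirr s (q (i + 1) - s) (Q' + s) _ _ (θ (i + 1)) ?_ hw hv hpos ?_ ?_ ?_]
    · abel
    · rw [hqs]; push_cast; rw [hQr]; linear_combination hdet
    · intro x hx
      refine ⟨x + (Q' + q (i + 1)), by omega, -(p + t * p' + p'), ?_⟩
      push_cast
      rw [hQr]
      linear_combination -h1 - ((t : ℝ) + 1) * h2
    · intro x hx hx'
      refine ⟨x + Q', by omega, -(p + t * p'), ?_⟩
      push_cast
      rw [hQr]
      linear_combination -h1 - (t : ℝ) * h2
    · intro x hx hx'
      refine ⟨x - q (i + 1), by omega, p', ?_⟩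
      rw [Nat.cast_sub (by omega)]
      linear_combination h2
end

section
/- Two-length configurations: for every i ≥ 0 and every t with 0 ≤ t < k_{i+1}, setting n = q_i + q_{i−1,t}, the multiset of the n gap lengths of the configuration of n points consists of exactly q_i copies of θ_{i−1,t} and exactly q_{i−1,t} copies of θ_i. -/
theorem tl_core (a : ℝ) (Q Q' : ℕ) (P P' D : ℤ) (A B : ℝ) (hA : 0 < A) (hB : 0 < B)
    (h1 : (Q : ℝ) * a - P = B) (h2 : (Q' : ℝ) * a - P' = -A)
    (hD : D * D = 1) (hdet : (Q : ℤ) * P' - Q' * P = D)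
    (x y m : ℤ) (r : ℝ) (hx0 : 0 ≤ x) (hx : x < Q + Q') (hy0 : 0 ≤ y) (hy : y < Q + Q')
    (hr : r = ((y : ℝ) - x) * a - m) (hr0 : 0 < r) :
    (if x < (Q' : ℤ) then B else A) ≤ r := by
  obtain ⟨u, v, hd, hm⟩ : ∃ u v : ℤ, u * Q + v * Q' = y - x ∧ u * P + v * P' = m := by
    refine ⟨D * ((y - x) * P' - m * Q'), D * (Q * m - (y - x) * P), ?_, ?_⟩
    · linear_combination (D * (y - x)) * hdet + (y - x) * hD
    · linear_combination (D * m) * hdet + m * hD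
  have hr' : r = u * B - v * A := by
    have hdR : (u : ℝ) * Q + v * Q' = y - x := by exact_mod_cast hd
    have hmR : (u : ℝ) * P + v * P' = m := by exact_mod_cast hm
    rw [hr, ← hdR, ← hmR, ← h1]
    linear_combination (v : ℝ) * h2
  have hQ : (0 : ℤ) ≤ Q := by positivity
  have hQ' : (0 : ℤ) ≤ Q' := by positivity
  rcases le_or_gt u 0 with hu | hu
  · have huR : (u : ℝ) ≤ 0 := by exact_mod_cast hu
    have hv : v < 0 := by
      by_contra hv
      have : (0 : ℝ) ≤ v := by exact_mod_cast not_lt.mp hv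
      nlinarith
    rcases hu.lt_or_eq with hu' | hu'
    · exfalso; nlinarith
    · subst hu'
      have hvR : (v : ℝ) ≤ -1 := by exact_mod_cast (by omega : v ≤ -1)
      split_ifs with hc
      · exfalso; nlinarith
      · push_cast at hr'; nlinarith
  · have huR : (1 : ℝ) ≤ u := by exact_mod_cast hu
    rcases le_or_gt v 0 with hv | hv
    · have hvR : (v : ℝ) ≤ 0 := by exact_mod_cast hv
      split_ifs with hc
      · nlinarith
      · rcases hv.lt_or_eq with hv' | hv'
        · have hvR : (v : ℝ) ≤ -1 := by exact_mod_cast (by omega : v ≤ -1)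
          nlinarith
        · subst hv'
          exfalso; nlinarith
    · exfalso; nlinarith

theorem tl_gapAt (a : ℝ) (Q Q' : ℕ) (P P' D : ℤ) (A B : ℝ) (hA : 0 < A) (hB : 0 < B)
    (h1 : (Q : ℝ) * a - P = B) (h2 : (Q' : ℝ) * a - P' = -A)
    (hD : D * D = 1) (hdet : (Q : ℤ) * P' - Q' * P = D) (x : ℕ) (hx : x < Q' + Q) :
    gapAt a (Q' + Q) (Int.fract (a * x)) = if x < Q' then B else A := by
  have core := tl_core a Q Q' P P' D A B hA hB h1 h2 hD hdet
  set g : ℝ := if x < Q' then B else A with hg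
  have hgpos : 0 < g := by rw [hg]; split_ifs <;> assumption
  have hif : (if (x : ℤ) < (Q' : ℤ) then B else A) = g := by
    rw [hg]; simp only [Nat.cast_lt]
  -- lower bound
  have low1 : ∀ d : ℝ, 0 < d → Int.fract (a * x) + d = 1 → g ≤ d := by
    intro d hd h
    rw [← hif]
    refine core x 0 (-⌊a * x⌋ - 1) d (by omega) (by omega) (by omega) (by omega) ?_ hd
    have := Int.self_sub_floor (a * x)
    push_cast
    linarith
  have low2 : ∀ d : ℝ, 0 < d → Int.fract (a * x) + d ∈ pts a (Q' + Q) → g ≤ d := by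
    intro d hd h
    simp only [pts, Finset.mem_image, Finset.mem_range] at h
    obtain ⟨y, hy, hyd⟩ := h
    rw [← hif]
    refine core x y (⌊a * y⌋ - ⌊a * x⌋) d (by omega) (by omega) (by omega) (by omega) ?_ hd
    have e1 := Int.self_sub_floor (a * x)
    have e2 := Int.self_sub_floor (a * y)
    push_cast
    linarith
  have hlt := Int.fract_lt_one (a * x)
  have hnn := Int.fract_nonneg (a * x)
  have hle : Int.fract (a * x) + g ≤ 1 := by
    have := low1 (1 - Int.fract (a * x)) (by linarith) (by ring)
    linarith
  have hmem : Int.fract (a * x) + g = 1 ∨ Int.fract (a * x) + g ∈ pts a (Q' + Q) := by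
    rcases hle.eq_or_lt with h | h
    · exact Or.inl h
    · right
      simp only [pts, Finset.mem_image, Finset.mem_range]
      have e1 := Int.self_sub_floor (a * x)
      by_cases hc : x < Q'
      · refine ⟨x + Q, by omega, ?_⟩
        rw [Int.fract_eq_iff]
        refine ⟨by linarith, h, ⌊a * x⌋ + P, ?_⟩
        have : g = B := by rw [hg, if_pos hc]
        rw [this]; push_cast; linarith
      · refine ⟨x - Q', by omega, ?_⟩
        rw [Int.fract_eq_iff]
        refine ⟨by linarith, h, ⌊a * x⌋ - P', ?_⟩
        have : g = A := by rw [hg, if_neg hc]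
        rw [this]; push_cast [Nat.cast_sub (not_lt.mp hc)]; linarith
  unfold gapAt
  refine IsLeast.csInf_eq ⟨⟨hgpos, hmem⟩, ?_⟩
  rintro d ⟨hd, h | h⟩
  · exact low1 d hd h
  · exact low2 d hd h

theorem tl_gaps (a : ℝ) (hirr : Irrational a)
    (Q Q' : ℕ) (P P' D : ℤ) (A B : ℝ) (hA : 0 < A) (hB : 0 < B)
    (h1 : (Q : ℝ) * a - P = B) (h2 : (Q' : ℝ) * a - P' = -A)
    (hD : D * D = 1) (hdet : (Q : ℤ) * P' - Q' * P = D) :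
    gaps a (Q' + Q) = Multiset.replicate Q' B + Multiset.replicate Q A := by
  have hinj : Function.Injective (fun x : ℕ => Int.fract (a * x)) := by
    intro x y hxy
    by_contra hne
    simp only [Int.fract_eq_fract] at hxy
    obtain ⟨z, hz⟩ := hxy
    have hne' : ((x : ℤ) - y) ≠ 0 := by omega
    refine (hirr.mul_intCast hne').ne_int z ?_
    push_cast; linarith
  unfold gaps
  have : (pts a (Q' + Q)).val = (Multiset.range (Q' + Q)).map (fun x : ℕ => Int.fract (a * x)) := by
    unfold pts
    rw [Finset.image_val_of_injOn hinj.injOn]; rfl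
  rw [this, Multiset.map_map]
  have hmap : (Multiset.range (Q' + Q)).map ((gapAt a (Q' + Q)) ∘ fun x : ℕ => Int.fract (a * x))
      = (Multiset.range (Q' + Q)).map (fun x => if x < Q' then B else A) := by
    refine Multiset.map_congr rfl fun x hx => ?_
    exact tl_gapAt a Q Q' P P' D A B hA hB h1 h2 hD hdet x (Multiset.mem_range.mp hx)
  rw [hmap, Multiset.range_add, Multiset.map_add, Multiset.map_map]
  congr 1
  · rw [Multiset.eq_replicate]
    refine ⟨by simp, fun b hb => ?_⟩
    obtain ⟨x, hx, rfl⟩ := Multiset.mem_map.mp hb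
    rw [if_pos (Multiset.mem_range.mp hx)]
  · rw [Multiset.eq_replicate]
    refine ⟨by simp, fun b hb => ?_⟩
    obtain ⟨x, hx, rfl⟩ := Multiset.mem_map.mp hb
    simp

theorem tl_inv (a : ℝ) (ha0 : 0 < a) (hirr : Irrational a)
    (θ : ℕ → ℝ) (q k : ℕ → ℕ)
    (hθ0 : θ 0 = 1) (hθ1 : θ 1 = a)
    (hq0 : q 0 = 0) (hq1 : q 1 = 1)
    (hk : ∀ i, (k (i + 1) : ℤ) = ⌊θ i / θ (i + 1)⌋)
    (hθrec : ∀ i, θ (i + 2) = θ i - (k (i + 1) : ℝ) * θ (i + 1))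
    (hqrec : ∀ i, q (i + 2) = q i + k (i + 1) * q (i + 1)) (m : ℕ) :
    ∃ e P P' : ℤ, (e = 1 ∨ e = -1) ∧ (q m : ℝ) * a - P = -(e * θ m) ∧
      (q (m + 1) : ℝ) * a - P' = e * θ (m + 1) ∧
      (q m : ℤ) * P' - q (m + 1) * P = -e ∧ 0 < θ m ∧ 0 < θ (m + 1) := by
  induction m with
  | zero =>
    refine ⟨1, 1, 0, Or.inl rfl, ?_, ?_, ?_, ?_, ?_⟩ <;> simp [hθ0, hθ1, hq0, hq1, ha0]
  | succ m ih =>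
    obtain ⟨e, P, P', he, h1, h2, h3, h4, h5⟩ := ih
    have g2 : (q (m + 2) : ℝ) * a - ((P + k (m + 1) * P' : ℤ) : ℝ) = -(e * θ (m + 2)) := by
      rw [hqrec, hθrec]; push_cast
      linear_combination h1 + (k (m + 1) : ℝ) * h2
    have g3 : (q (m + 1) : ℤ) * (P + k (m + 1) * P') - q (m + 2) * P' = e := by
      rw [hqrec]; push_cast
      linear_combination -h3
    have hnn : 0 ≤ θ (m + 2) := by
      have := Int.floor_le (θ m / θ (m + 1))
      rw [← hk, le_div_iff₀ h5] at this
      rw [hθrec]; push_cast at this; linarith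
    have hne : θ (m + 2) ≠ 0 := by
      intro h0
      rw [h0, mul_zero, neg_zero] at g2
      by_cases hq : q (m + 2) = 0
      · rw [hq] at g2 g3
        have : (P + k (m + 1) * P' : ℤ) = 0 := by
          have : ((P + k (m + 1) * P' : ℤ) : ℝ) = 0 := by
            simp only [Nat.cast_zero, zero_mul, zero_sub, neg_eq_zero] at g2; exact g2
          exact_mod_cast this
        rw [this] at g3
        simp at g3
        omega
      · exact (hirr.natCast_mul hq).ne_int _ (sub_eq_zero.mp g2)
    refine ⟨-e, P', P + k (m + 1) * P', by omega, ?_, ?_, ?_, h5, lt_of_le_of_ne hnn hne.symm⟩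
    · rw [h2]; push_cast; ring
    · rw [g2]; push_cast; ring
    · rw [g3]; ring

/-- **Two-length configurations.**
Indexing is shifted by one: `θ (m+1)`, `q (m+1)` denote the mathematical `θ_m`, `q_m`
(so `θ 0 = θ₋₁ = 1`, `θ 1 = θ₀ = a`, `q 0 = q₋₁ = 0`, `q 1 = q₀ = 1`), and `k (i+1) = k_{i+1}`.
For `i ≥ 0` and `0 ≤ t < k_{i+1}`, with `n = q_i + q_{i-1,t}`, the multiset of the `n` gap
lengths consists of `q_i` copies of `θ_{i-1,t}` and `q_{i-1,t}` copies of `θ_i`. -/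
theorem two_length_configurations (a : ℝ) (ha0 : 0 < a) (ha1 : a < 1) (hirr : Irrational a)
    (θ : ℕ → ℝ) (q k : ℕ → ℕ)
    (hθ0 : θ 0 = 1) (hθ1 : θ 1 = a)
    (hq0 : q 0 = 0) (hq1 : q 1 = 1)
    (hk : ∀ i, (k (i + 1) : ℤ) = ⌊θ i / θ (i + 1)⌋)
    (hθrec : ∀ i, θ (i + 2) = θ i - (k (i + 1) : ℝ) * θ (i + 1))
    (hqrec : ∀ i, q (i + 2) = q i + k (i + 1) * q (i + 1))
    (i t : ℕ) (ht : t < k (i + 1)) :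
    gaps a (q (i + 1) + (q i + t * q (i + 1))) =
      Multiset.replicate (q (i + 1)) (θ i - (t : ℝ) * θ (i + 1)) +
      Multiset.replicate (q i + t * q (i + 1)) (θ (i + 1)) := by
  obtain ⟨e, P, P', he, h1, h2, h3, h4, h5⟩ :=
    tl_inv a ha0 hirr θ q k hθ0 hθ1 hq0 hq1 hk hθrec hqrec i
  have hA : 0 < θ i - (t : ℝ) * θ (i + 1) := by
    have := Int.floor_le (θ i / θ (i + 1))
    rw [← hk, le_div_iff₀ h5] at this
    push_cast at this
    have ht' : (t : ℝ) < k (i + 1) := by exact_mod_cast ht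
    nlinarith
  rcases he with rfl | rfl
  · have := tl_gaps a hirr (q (i + 1)) (q i + t * q (i + 1)) P' (P + t * P') 1
      (θ i - (t : ℝ) * θ (i + 1)) (θ (i + 1)) hA h5 (by rw [h2]; simp)
      (by push_cast at h1 h2 ⊢; linear_combination h1 + (t : ℝ) * h2) (by norm_num)
      (by push_cast; linear_combination -h3)
    rw [add_comm (q (i + 1)), this, add_comm]
  · have := tl_gaps a hirr (q i + t * q (i + 1)) (q (i + 1)) (P + t * P') P' 1
      (θ (i + 1)) (θ i - (t : ℝ) * θ (i + 1)) h5 hA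
      (by push_cast at h1 h2 ⊢; linear_combination h1 + (t : ℝ) * h2)
      (by rw [h2]; simp) (by norm_num)
      (by push_cast; linear_combination h3)
    exact this
end

section
/- Directed reduction (Property 2): for every i ≥ 0 and every t with 0 ≤ t < k_{i+1}, set n = q_i + q_{i−1,t}. The q_i new points added when passing from the configuration of n points to the configuration of n + q_i points, namely the points {a·x} for n ≤ x < n + q_i, are exactly the points s + θ_i for s ranging over the left endpoints of the q_i gaps of length θ_{i−1,t} if i is even, and exactly the points s + θ_{i−1,t} − θ_i for s ranging over those same left endpoints if i is odd; no new point falls in any gap of length θ_i. -/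
/-- The two basic lattice vectors force every small positive displacement to be long. -/
lemma dr_core (a A B : ℝ) (Q R : ℕ) (p p' e : ℤ) (he : e = 1 ∨ e = -1) (hQ : 0 < Q)
    (hB : 0 < B) (hAB : B < A) (h1 : a * Q = p + e * B) (h2 : a * R = p' - e * A)
    (hdet : (Q : ℝ) * A + R * B = 1) (x y : ℕ) (hx : x < Q + R) (hy : y < Q + R)
    (j : ℤ) (d : ℝ) (hd : d = a * ((y : ℝ) - x) - j) (hd0 : 0 < d) (hdA : d < A) :
    B ≤ d ∧ (e = 1 → x < R) ∧ (e = -1 → Q ≤ x) := by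
  have hee : (e : ℝ) * e = 1 := by rcases he with h | h <;> simp [h]
  have heeZ : e * e = 1 := by rcases he with h | h <;> simp [h]
  have hdetZ : (Q : ℤ) * p' - R * p = e := by
    have : (Q : ℝ) * p' - R * p = e := by
      have e1 : (p : ℝ) = a * Q - e * B := by linarith
      have e2 : (p' : ℝ) = a * R + e * A := by linarith
      rw [e1, e2]
      linear_combination (e : ℝ) * hdet
    exact_mod_cast this
  obtain ⟨m, hm⟩ : ∃ m : ℤ, m = (y : ℤ) - x := ⟨_, rfl⟩
  obtain ⟨U, hU⟩ : ∃ U : ℤ, U = m * p' - j * R := ⟨_, rfl⟩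
  obtain ⟨V, hV⟩ : ∃ V : ℤ, V = m * p - j * Q := ⟨_, rfl⟩
  have hmUV : m = e * (U * Q - V * R) := by
    rw [hU, hV]; linear_combination (-m) * heeZ - e * m * hdetZ
  have hdUV : d = U * B + V * A := by
    have hmR : (m : ℝ) = y - x := by rw [hm]; push_cast; ring
    rw [hd, ← hmR, hU, hV]
    push_cast
    have e1 : (p : ℝ) = a * Q - e * B := by linarith
    have e2 : (p' : ℝ) = a * R + e * A := by linarith
    rw [e1, e2]
    linear_combination (-(a * m) + j) * hdet
  have hA : 0 < A := hB.trans hAB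
  have hbd1 : m < Q + R := by omega
  have hbd2 : -((Q : ℤ) + R) < m := by omega
  have hQZ : (0 : ℤ) < Q := by exact_mod_cast hQ
  have hRZ : (0 : ℤ) ≤ R := by positivity
  -- opposite signs are impossible
  have hno1 : ¬ (1 ≤ U ∧ V ≤ -1) := by
    rintro ⟨hu, hv⟩
    have : (Q : ℤ) + R ≤ U * Q - V * R := by nlinarith
    rcases he with h | h <;> rw [h] at hmUV <;> linarith
  have hno2 : ¬ (U ≤ -1 ∧ 1 ≤ V) := by
    rintro ⟨hu, hv⟩
    have : U * Q - V * R ≤ -((Q : ℤ) + R) := by nlinarith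
    rcases he with h | h <;> rw [h] at hmUV <;> linarith
  have hV0 : V = 0 ∧ 1 ≤ U := by
    rcases lt_trichotomy V 0 with hv | hv | hv
    · have hu : U ≤ 0 := by
        by_contra hc
        exact hno1 ⟨by omega, by omega⟩
      have hu' : (U : ℝ) ≤ 0 := by exact_mod_cast hu
      have hv' : (V : ℝ) ≤ 0 := by exact_mod_cast hv.le
      nlinarith
    · refine ⟨hv, ?_⟩
      by_contra hc
      have hu' : (U : ℝ) ≤ 0 := by exact_mod_cast (by omega : U ≤ 0)
      rw [hv] at hdUV
      push_cast at hdUV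
      nlinarith
    · have hu : 0 ≤ U := by
        by_contra hc
        exact hno2 ⟨by omega, by omega⟩
      have hu' : (0 : ℝ) ≤ U := by exact_mod_cast hu
      have hv' : (1 : ℝ) ≤ V := by exact_mod_cast hv
      nlinarith
  obtain ⟨hv, hu⟩ := hV0
  have hu' : (1 : ℝ) ≤ U := by exact_mod_cast hu
  rw [hv] at hdUV hmUV
  have hUQ : (Q : ℤ) ≤ U * Q := by nlinarith
  refine ⟨?_, ?_, ?_⟩
  · push_cast at hdUV
    nlinarith
  · intro h
    rw [h] at hmUV
    have : (Q : ℤ) ≤ m := by linarith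
    omega
  · intro h
    rw [h] at hmUV
    have : m ≤ -(Q : ℤ) := by linarith
    omega

lemma dr_mem_pts {a : ℝ} {n : ℕ} {s : ℝ} :
    s ∈ pts a n ↔ ∃ x : ℕ, x < n ∧ Int.fract (a * x) = s := by
  simp [pts]

/-- Every admissible displacement comes from an index below `n`. -/
lemma dr_disp (a : ℝ) (n x : ℕ) (hn : 0 < n) (d : ℝ)
    (h : Int.fract (a * x) + d = 1 ∨ Int.fract (a * x) + d ∈ pts a n) :
    ∃ y : ℕ, y < n ∧ ∃ j : ℤ, d = a * ((y : ℝ) - x) - j := by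
  have hx := Int.self_sub_floor (a * x)
  rcases h with h | h
  · refine ⟨0, hn, -1 - ⌊a * x⌋, ?_⟩
    push_cast
    linarith
  · obtain ⟨y, hy, hys⟩ := dr_mem_pts.1 h
    have hy' := Int.self_sub_floor (a * y)
    refine ⟨y, hy, ⌊a * y⌋ - ⌊a * x⌋, ?_⟩
    push_cast
    linarith

/-- Computing a gap. -/
lemma dr_gap (a : ℝ) (n x y : ℕ) (hy : y < n) (c : ℝ) (hc : 0 < c) (j : ℤ)
    (hj : a * y = a * x + j + c)
    (hmin : ∀ d, 0 < d → (∃ y : ℕ, y < n ∧ ∃ j : ℤ, d = a * ((y : ℝ) - x) - j) → c ≤ d) :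
    gapAt a n (Int.fract (a * x)) = c ∧ Int.fract (a * x) + c ≤ 1 := by
  have hn : 0 < n := by omega
  have hx := Int.self_sub_floor (a * x)
  have hlt := Int.fract_lt_one (a * x)
  have hnn := Int.fract_nonneg (a * x)
  have hle : Int.fract (a * x) + c ≤ 1 := by
    have := hmin (1 - Int.fract (a * x)) (by linarith) (dr_disp a n x hn _ (Or.inl (by ring)))
    linarith
  refine ⟨?_, hle⟩
  unfold gapAt
  apply IsLeast.csInf_eq
  refine ⟨⟨hc, ?_⟩, ?_⟩
  · rcases hle.eq_or_lt with h | h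
    · exact Or.inl h
    · refine Or.inr (dr_mem_pts.2 ⟨y, hy, ?_⟩)
      rw [Int.fract_eq_iff]
      refine ⟨by linarith, h, ⌊a * x⌋ + j, ?_⟩
      push_cast
      linarith
  · rintro d ⟨hd, h⟩
    exact hmin d hd (dr_disp a n x hn d h)

lemma dr_gap_le (a : ℝ) (n : ℕ) (s s' : ℝ) (hs : s' ∈ pts a n) (h : s < s') :
    gapAt a n s ≤ s' - s := by
  unfold gapAt
  apply csInf_le
  · exact ⟨0, fun d hd => hd.1.le⟩
  · exact ⟨by linarith, Or.inr (by simpa using hs)⟩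

/-- Third assertion, abstractly. -/
lemma dr_third (a A B : ℝ) (n : ℕ) (hB : 0 < B) (hAB : B < A) (s₀ c : ℝ) (hs₀ : s₀ ∈ pts a n)
    (hg : gapAt a n s₀ = A) (hc : 0 < c) (hcA : c < A) (s : ℝ) (hs : s ∈ pts a n)
    (hgs : gapAt a n s = B) : ¬ (s < s₀ + c ∧ s₀ + c < s + B) := by
  rintro ⟨h1, h2⟩
  rcases lt_trichotomy s s₀ with h | h | h
  · have := dr_gap_le a n s s₀ hs₀ h
    linarith
  · rw [h, hg] at hgs
    linarith
  · have := dr_gap_le a n s₀ s hs h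
    linarith

/-- The abstract even case. -/
lemma dr_even (a A B : ℝ) (Q R : ℕ) (p p' : ℤ) (hQ : 0 < Q)
    (hB : 0 < B) (hAB : B < A) (h1 : a * Q = p + B) (h2 : a * R = p' - A)
    (hdet : (Q : ℝ) * A + R * B = 1) :
    (∀ x : ℕ, x < R → gapAt a (Q + R) (Int.fract (a * x)) = B) ∧
    (∀ x : ℕ, R ≤ x → x < Q + R → gapAt a (Q + R) (Int.fract (a * x)) = A ∧
      Int.fract (a * ((x + Q : ℕ) : ℝ)) = Int.fract (a * x) + B) := by
  have core := dr_core a A B Q R p p' 1 (Or.inl rfl) hQ hB hAB (by push_cast; linarith)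
    (by push_cast; linarith) hdet
  constructor
  · intro x hx
    refine (dr_gap a (Q + R) x (x + Q) (by omega) B hB p (by push_cast; linarith) ?_).1
    rintro d hd ⟨y, hy, j, hj⟩
    by_contra hc
    have := (core x y (by omega) hy j d hj hd (by linarith)).1
    linarith
  · intro x hx hx'
    have hg := dr_gap a (Q + R) x (x - R) (by omega) A (hB.trans hAB) (-p')
      (by push_cast [Nat.cast_sub hx]; linarith) (by
        rintro d hd ⟨y, hy, j, hj⟩
        by_contra hc
        have := (core x y (by omega) hy j d hj hd (by linarith)).2.1 rfl
        omega)
    refine ⟨hg.1, ?_⟩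
    have := Int.self_sub_floor (a * x)
    have hnn := Int.fract_nonneg (a * x)
    rw [Int.fract_eq_iff]
    refine ⟨by linarith, by linarith [hg.2], ⌊a * x⌋ + p, ?_⟩
    push_cast
    linarith

/-- The abstract odd case. -/
lemma dr_odd (a A B : ℝ) (Q R : ℕ) (p p' : ℤ) (hQ : 0 < Q)
    (hB : 0 < B) (hAB : B < A) (h1 : a * Q = p - B) (h2 : a * R = p' + A)
    (hdet : (Q : ℝ) * A + R * B = 1) :
    (∀ x : ℕ, Q ≤ x → x < Q + R → gapAt a (Q + R) (Int.fract (a * x)) = B) ∧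
    (∀ x : ℕ, x < Q → gapAt a (Q + R) (Int.fract (a * x)) = A ∧
      Int.fract (a * ((x + (Q + R) : ℕ) : ℝ)) = Int.fract (a * x) + (A - B)) := by
  have core := dr_core a A B Q R p p' (-1) (Or.inr rfl) hQ hB hAB (by push_cast; linarith)
    (by push_cast; linarith) hdet
  constructor
  · intro x hx hx'
    refine (dr_gap a (Q + R) x (x - Q) (by omega) B hB (-p)
      (by push_cast [Nat.cast_sub hx]; linarith) ?_).1
    rintro d hd ⟨y, hy, j, hj⟩
    by_contra hc
    have := (core x y (by omega) hy j d hj hd (by linarith)).1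
    linarith
  · intro x hx
    have hg := dr_gap a (Q + R) x (x + R) (by omega) A (hB.trans hAB) p'
      (by push_cast; linarith) (by
        rintro d hd ⟨y, hy, j, hj⟩
        by_contra hc
        have := (core x y (by omega) hy j d hj hd (by linarith)).2.2 rfl
        omega)
    refine ⟨hg.1, ?_⟩
    have := Int.self_sub_floor (a * x)
    have hnn := Int.fract_nonneg (a * x)
    rw [Int.fract_eq_iff]
    refine ⟨by linarith, by linarith [hg.2], ⌊a * x⌋ + p + p', ?_⟩
    push_cast
    linarith

/-- Invariants of the continued fraction expansion. -/
lemma dr_inv (a : ℝ) (ha0 : 0 < a) (ha1 : a < 1) (hirr : Irrational a)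
    (θ : ℕ → ℝ) (q k : ℕ → ℕ)
    (hθ0 : θ 0 = 1) (hθ1 : θ 1 = a)
    (hq0 : q 0 = 0) (hq1 : q 1 = 1)
    (hk : ∀ i, (k (i + 1) : ℤ) = ⌊θ i / θ (i + 1)⌋)
    (hθrec : ∀ i, θ (i + 2) = θ i - (k (i + 1) : ℝ) * θ (i + 1))
    (hqrec : ∀ i, q (i + 2) = q i + k (i + 1) * q (i + 1)) (i : ℕ) :
    0 < θ (i + 1) ∧ θ (i + 1) < θ i ∧ 0 < q (i + 1) ∧
    (q (i + 1) : ℝ) * θ i + q i * θ (i + 1) = 1 ∧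
    ∃ p p' : ℤ, a * q (i + 1) = p + (-1) ^ i * θ (i + 1) ∧ a * q i = p' - (-1) ^ i * θ i := by
  induction i with
  | zero =>
    refine ⟨by simpa [hθ1], by simpa [hθ1, hθ0], by simp [hq1], by simp [hq1, hq0, hθ0],
      0, 1, by simp [hq1, hθ1], by simp [hq0, hθ0]⟩
  | succ i ih =>
    obtain ⟨hpos, hlt, hq, hdet, p, p', h1, h2⟩ := ih
    have hkR : (k (i + 1) : ℝ) = (⌊θ i / θ (i + 1)⌋ : ℤ) := by rw [← hk]; simp
    have hk1 : 1 ≤ k (i + 1) := by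
      have : (1 : ℤ) ≤ ⌊θ i / θ (i + 1)⌋ := by
        rw [Int.le_floor, le_div_iff₀ hpos]
        push_cast
        linarith
      rw [← hk] at this
      exact_mod_cast this
    have hqpos : 0 < q (i + 2) := by
      rw [hqrec]
      have := Nat.mul_pos hk1 hq
      omega
    have hnn : 0 ≤ θ (i + 2) := by
      have := Int.floor_le (θ i / θ (i + 1))
      rw [le_div_iff₀ hpos, ← hkR] at this
      rw [hθrec]
      linarith
    have hlt' : θ (i + 2) < θ (i + 1) := by
      have := Int.lt_floor_add_one (θ i / θ (i + 1))
      rw [div_lt_iff₀ hpos, ← hkR] at this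
      rw [hθrec]
      linarith
    have hnew : a * q (i + 2) = ((p' + k (i + 1) * p : ℤ) : ℝ) + (-1) ^ (i + 1) * θ (i + 2) := by
      rw [hqrec, hθrec]
      push_cast
      rw [pow_succ]
      linear_combination h2 + (k (i + 1) : ℝ) * h1
    refine ⟨lt_of_le_of_ne hnn ?_, hlt', hqpos, ?_, p' + k (i + 1) * p, p, hnew, ?_⟩
    · intro h0
      rw [← h0] at hnew
      have hqne : (q (i + 2) : ℝ) ≠ 0 := by positivity
      apply hirr
      refine ⟨((p' + k (i + 1) * p : ℤ) : ℚ) / (q (i + 2) : ℚ), ?_⟩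
      rw [Rat.cast_div, div_eq_iff (by exact_mod_cast hqne)]
      rw [Rat.cast_intCast, Rat.cast_natCast]
      linarith
    · show (q (i + 2) : ℝ) * θ (i + 1) + q (i + 1) * θ (i + 2) = 1
      rw [hqrec, hθrec]
      push_cast
      linear_combination hdet
    · rw [pow_succ]
      linear_combination h1

/-- **Directed reduction.**
Indexing is shifted by one: `θ (m+1)`, `q (m+1)` denote the mathematical `θ_m`, `q_m`
(so `θ 0 = θ₋₁ = 1`, `θ 1 = θ₀ = a`, `q 0 = q₋₁ = 0`, `q 1 = q₀ = 1`), and `k (i+1) = k_{i+1}`.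
For `i ≥ 0`, `0 ≤ t < k_{i+1}` and `n = q_i + q_{i-1,t}`, the `q_i` new points `{a·x}`,
`n ≤ x < n + q_i`, are exactly the points `s + θ_i` (for `i` even), resp.
`s + θ_{i-1,t} - θ_i` (for `i` odd), for `s` ranging over the left endpoints of the `q_i`
gaps of length `θ_{i-1,t}`; and no new point falls in any gap of length `θ_i`. -/
theorem directed_reduction (a : ℝ) (ha0 : 0 < a) (ha1 : a < 1) (hirr : Irrational a)
    (θ : ℕ → ℝ) (q k : ℕ → ℕ)
    (hθ0 : θ 0 = 1) (hθ1 : θ 1 = a)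
    (hq0 : q 0 = 0) (hq1 : q 1 = 1)
    (hk : ∀ i, (k (i + 1) : ℤ) = ⌊θ i / θ (i + 1)⌋)
    (hθrec : ∀ i, θ (i + 2) = θ i - (k (i + 1) : ℝ) * θ (i + 1))
    (hqrec : ∀ i, q (i + 2) = q i + k (i + 1) * q (i + 1))
    (i t : ℕ) (ht : t < k (i + 1))
    (n : ℕ) (hn : n = q (i + 1) + (q i + t * q (i + 1))) :
    (Even i →
      (Finset.Ico n (n + q (i + 1))).image (fun x : ℕ => Int.fract (a * x)) =
        ((pts a n).filter (fun s => gapAt a n s = θ i - (t : ℝ) * θ (i + 1))).image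
          (fun s => s + θ (i + 1))) ∧
    (Odd i →
      (Finset.Ico n (n + q (i + 1))).image (fun x : ℕ => Int.fract (a * x)) =
        ((pts a n).filter (fun s => gapAt a n s = θ i - (t : ℝ) * θ (i + 1))).image
          (fun s => s + (θ i - (t : ℝ) * θ (i + 1) - θ (i + 1)))) ∧
    (∀ x : ℕ, n ≤ x → x < n + q (i + 1) → ∀ s ∈ pts a n, gapAt a n s = θ (i + 1) →
      ¬(s < Int.fract (a * x) ∧ Int.fract (a * x) < s + θ (i + 1))) := by
  obtain ⟨hB, -, hQ, hdet, p, p', h1, h2⟩ :=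
    dr_inv a ha0 ha1 hirr θ q k hθ0 hθ1 hq0 hq1 hk hθrec hqrec i
  have hnext := (dr_inv a ha0 ha1 hirr θ q k hθ0 hθ1 hq0 hq1 hk hθrec hqrec (i + 1)).1
  rw [show i + 1 + 1 = i + 2 from rfl, hθrec] at hnext
  have htk : (t : ℝ) + 1 ≤ k (i + 1) := by exact_mod_cast ht
  obtain ⟨B, hBdef⟩ : ∃ B, B = θ (i + 1) := ⟨_, rfl⟩
  obtain ⟨A, hAdef⟩ : ∃ A, A = θ i - (t : ℝ) * θ (i + 1) := ⟨_, rfl⟩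
  obtain ⟨Q, hQdef⟩ : ∃ Q, Q = q (i + 1) := ⟨_, rfl⟩
  obtain ⟨R, hRdef⟩ : ∃ R, R = q i + t * q (i + 1) := ⟨_, rfl⟩
  have hAB : B < A := by rw [hBdef, hAdef]; nlinarith
  have hdet' : (Q : ℝ) * A + R * B = 1 := by
    rw [hQdef, hAdef, hRdef, hBdef]; push_cast; linear_combination hdet
  have h1' : a * Q = p + (-1) ^ i * B := by rw [hQdef, hBdef]; exact h1
  have h2' : a * R = ((p' + t * p : ℤ) : ℝ) - (-1) ^ i * A := by
    rw [hRdef, hAdef]; push_cast; linear_combination h2 + (t : ℝ) * h1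
  rw [← hAdef, ← hBdef, ← hQdef]
  rw [← hBdef] at hB
  rw [← hQdef] at hQ
  rw [← hQdef] at hRdef
  rw [← hQdef, ← hRdef] at hn
  clear hnext h1 h2 hdet
  subst hn
  rcases Nat.even_or_odd i with hi | hi
  · rw [hi.neg_one_pow] at h1' h2'
    obtain ⟨g1, g2⟩ := dr_even a A B Q R p _ hQ hB hAB (by linarith) (by rw [h2', one_mul]) hdet'
    refine ⟨fun _ => ?_, fun ho => absurd hi (Nat.not_even_iff_odd.2 ho), ?_⟩
    · ext z
      simp only [Finset.mem_image, Finset.mem_Ico, Finset.mem_filter]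
      constructor
      · rintro ⟨x, ⟨hx1, hx2⟩, rfl⟩
        obtain ⟨y, rfl⟩ : ∃ y, x = y + Q := ⟨x - Q, by omega⟩
        obtain ⟨e1, e2⟩ := g2 y (by omega) (by omega)
        exact ⟨_, ⟨dr_mem_pts.2 ⟨y, by omega, rfl⟩, e1⟩, e2.symm⟩
      · rintro ⟨s, ⟨hs, hg⟩, rfl⟩
        obtain ⟨y, hy, rfl⟩ := dr_mem_pts.1 hs
        have hRy : R ≤ y := by
          by_contra hc
          have := g1 y (by omega)
          linarith
        exact ⟨y + Q, ⟨by omega, by omega⟩, (g2 y hRy hy).2⟩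
    · intro x hx1 hx2 s hs hgs
      obtain ⟨y, rfl⟩ : ∃ y, x = y + Q := ⟨x - Q, by omega⟩
      obtain ⟨e1, e2⟩ := g2 y (by omega) (by omega)
      rw [e2]
      exact dr_third a A B (Q + R) hB hAB _ B (dr_mem_pts.2 ⟨y, by omega, rfl⟩) e1 hB hAB s hs hgs
  · rw [hi.neg_one_pow] at h1' h2'
    obtain ⟨g1, g2⟩ := dr_odd a A B Q R p _ hQ hB hAB (by linarith)
      (by rw [h2']; ring) hdet'
    refine ⟨fun he => absurd hi (Nat.not_odd_iff_even.2 he), fun _ => ?_, ?_⟩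
    · ext z
      simp only [Finset.mem_image, Finset.mem_Ico, Finset.mem_filter]
      constructor
      · rintro ⟨x, ⟨hx1, hx2⟩, rfl⟩
        obtain ⟨y, rfl⟩ : ∃ y, x = y + (Q + R) := ⟨x - (Q + R), by omega⟩
        obtain ⟨e1, e2⟩ := g2 y (by omega)
        exact ⟨_, ⟨dr_mem_pts.2 ⟨y, by omega, rfl⟩, e1⟩, e2.symm⟩
      · rintro ⟨s, ⟨hs, hg⟩, rfl⟩
        obtain ⟨y, hy, rfl⟩ := dr_mem_pts.1 hs
        have hQy : y < Q := by
          by_contra hc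
          have := g1 y (by omega) hy
          linarith
        exact ⟨y + (Q + R), ⟨by omega, by omega⟩, (g2 y hQy).2⟩
    · intro x hx1 hx2 s hs hgs
      obtain ⟨y, rfl⟩ : ∃ y, x = y + (Q + R) := ⟨x - (Q + R), by omega⟩
      obtain ⟨e1, e2⟩ := g2 y (by omega)
      rw [e2]
      exact dr_third a A B (Q + R) hB hAB _ (A - B) (dr_mem_pts.2 ⟨y, by omega, rfl⟩) e1
        (by linarith) (by linarith) s hs hgs
end

section
/- Distance update for the subtraction-based step, even case: let b ∈ [0,1), let i ≥ 0 be even, let 0 ≤ t < k_{i+1}, and set n = q_i + q_{i−1,t}. Then d_{n+q_i}(b) = d_n(b) if d_n(b) < θ_i, and d_{n+q_i}(b) = d_n(b) − θ_i otherwise. -/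
/-- `dLeft a b n = min { {b - a·x} : 0 ≤ x < n }`, the distance from `b` to the nearest point
of the configuration `{a·x mod 1 : 0 ≤ x < n}` lying to its left (cyclically). -/
noncomputable def dLeft (a b : ℝ) (n : ℕ) : ℝ :=
  sInf {y : ℝ | ∃ x : ℕ, x < n ∧ y = Int.fract (b - a * x)}

lemma dLeft_spec (a b : ℝ) (n : ℕ) (hn : 0 < n) :
    ∃ z < n, dLeft a b n = Int.fract (b - a * z) ∧
      ∀ x < n, dLeft a b n ≤ Int.fract (b - a * x) := by
  obtain ⟨z, hz, hmin⟩ := Finset.exists_min_image (Finset.range n)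
    (fun x : ℕ => Int.fract (b - a * x)) ⟨0, by simpa using hn⟩
  have hz' := Finset.mem_range.1 hz
  have hl : IsLeast {y : ℝ | ∃ x : ℕ, x < n ∧ y = Int.fract (b - a * x)}
      (Int.fract (b - a * z)) := by
    refine ⟨⟨z, hz', rfl⟩, ?_⟩
    rintro y ⟨x, hx, rfl⟩
    exact hmin x (Finset.mem_range.2 hx)
  have he : dLeft a b n = Int.fract (b - a * z) := hl.csInf_eq
  refine ⟨z, hz', he, fun x hx => ?_⟩
  rw [he]
  exact hmin x (Finset.mem_range.2 hx)

lemma theta_inv (a : ℝ) (ha0 : 0 < a) (hirr : Irrational a)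
    (θ : ℕ → ℝ) (q k : ℕ → ℕ)
    (hθ0 : θ 0 = 1) (hθ1 : θ 1 = a)
    (hq0 : q 0 = 0) (hq1 : q 1 = 1)
    (hk : ∀ i, (k (i + 1) : ℤ) = ⌊θ i / θ (i + 1)⌋)
    (hθrec : ∀ i, θ (i + 2) = θ i - (k (i + 1) : ℝ) * θ (i + 1))
    (hqrec : ∀ i, q (i + 2) = q i + k (i + 1) * q (i + 1)) (j : ℕ) :
    0 < θ j ∧ 0 < θ (j + 1) ∧ ∃ P P' : ℤ,
      θ j = (-1) ^ j * (P - q j * a) ∧ θ (j + 1) = (-1) ^ j * (q (j + 1) * a - P') ∧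
      P * q (j + 1) - P' * q j = (-1) ^ j := by
  induction j with
  | zero =>
    refine ⟨by simp [hθ0], by simpa [hθ1] using ha0, 1, 0, ?_, ?_, ?_⟩ <;>
      simp [hθ0, hθ1, hq0, hq1]
  | succ j ih =>
    obtain ⟨h0, h1, P, P', e0, e1, hd⟩ := ih
    have e2 : θ (j + 2) = (-1) ^ (j + 1) * (q (j + 2) * a - ((P + k (j + 1) * P' : ℤ) : ℝ)) := by
      rw [hθrec, hqrec, e0, e1]; push_cast; ring
    have hd2 : P' * q (j + 2) - (P + k (j + 1) * P') * q (j + 1) = (-1) ^ (j + 1) := by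
      rw [hqrec, pow_succ, ← hd]; push_cast; ring
    have hkr : (k (j + 1) : ℝ) = (⌊θ j / θ (j + 1)⌋ : ℝ) := by exact_mod_cast hk j
    have hnn : 0 ≤ θ (j + 2) := by
      have := Int.floor_le (θ j / θ (j + 1))
      rw [le_div_iff₀ h1] at this
      rw [hθrec, hkr]; linarith
    have hne : θ (j + 2) ≠ 0 := by
      intro hz
      rw [e2] at hz
      have hz2 : (q (j + 2) : ℝ) * a - ((P + k (j + 1) * P' : ℤ) : ℝ) = 0 := by
        rcases mul_eq_zero.1 hz with h | h
        · exact absurd h (pow_ne_zero _ (by norm_num))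
        · exact h
      have hq : q (j + 2) = 0 := by
        by_contra hq
        refine hirr ⟨((P + k (j + 1) * P' : ℤ) : ℚ) / (q (j + 2) : ℚ), ?_⟩
        have : (q (j + 2) : ℝ) ≠ 0 := by exact_mod_cast hq
        push_cast at hz2 ⊢
        field_simp
        linarith
      rw [hq] at hz2 hd2
      have hP : (P + k (j + 1) * P' : ℤ) = 0 := by
        have : ((P + k (j + 1) * P' : ℤ) : ℝ) = 0 := by
          simp only [Nat.cast_zero, zero_mul, zero_sub] at hz2
          linarith
        exact_mod_cast this
      rw [hP] at hd2
      have : ((-1 : ℤ)) ^ (j + 1) ≠ 0 := pow_ne_zero _ (by norm_num)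
      apply this
      rw [← hd2]; simp
    refine ⟨h1, lt_of_le_of_ne hnn hne.symm, P', P + k (j + 1) * P', ?_, e2, hd2⟩
    rw [e1]; ring

lemma best_approx (a th th' : ℝ) (q q' : ℕ) (P P' : ℤ) (h0 : 0 < th) (h1 : 0 < th')
    (e0 : th = q * a - P) (e1 : th' = P' - q' * a) (hd : P' * q - P * q' = 1)
    (m l : ℤ) (hm : 0 < m) (hm2 : m < q + q') (hs : 0 ≤ a * m - l) : th ≤ a * m - l := by
  by_contra hlt
  push Not at hlt
  obtain ⟨u, hu⟩ : ∃ u : ℤ, u = P' * m - q' * l := ⟨_, rfl⟩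
  obtain ⟨v, hv⟩ : ∃ v : ℤ, v = q * l - P * m := ⟨_, rfl⟩
  have em : m = u * q + v * q' := by
    rw [hu, hv]; linear_combination (-m) * hd
  have el : l = u * P + v * P' := by
    rw [hu, hv]; linear_combination (-l) * hd
  have es : a * m - l = u * th - v * th' := by
    rw [e0, e1, em, el]; push_cast; ring
  rw [es] at hs hlt
  rcases le_or_gt u 0 with h | h
  · have hv0 : v ≤ 0 := by
      by_contra hv0
      push Not at hv0
      have a1 : (u : ℝ) ≤ 0 := by exact_mod_cast h
      have a2 : (0 : ℝ) < v := by exact_mod_cast hv0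
      nlinarith [mul_pos a2 h1]
    have : (0 : ℤ) ≤ q := by positivity
    have : (0 : ℤ) ≤ q' := by positivity
    nlinarith
  · have hv0 : 0 < v := by
      by_contra hv0
      push Not at hv0
      have a1 : (1 : ℝ) ≤ u := by exact_mod_cast h
      have a2 : (v : ℝ) ≤ 0 := by exact_mod_cast hv0
      nlinarith
    have : (0 : ℤ) ≤ q := by positivity
    have : (0 : ℤ) ≤ q' := by positivity
    nlinarith

/-- **Distance update for the subtraction-based step, even case.**
Indexing is shifted by one: `θ (m+1)`, `q (m+1)` denote the mathematical `θ_m`, `q_m`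
(so `θ 0 = θ₋₁ = 1`, `θ 1 = θ₀ = a`, `q 0 = q₋₁ = 0`, `q 1 = q₀ = 1`), and `k (i+1) = k_{i+1}`.
For `b ∈ [0,1)`, `i` even, `0 ≤ t < k_{i+1}` and `n = q_i + q_{i-1,t}`:
`d_{n+q_i}(b) = d_n(b)` if `d_n(b) < θ_i`, and `d_{n+q_i}(b) = d_n(b) - θ_i` otherwise. -/
theorem distance_update_subtractive_even (a : ℝ) (ha0 : 0 < a) (ha1 : a < 1)
    (hirr : Irrational a)
    (θ : ℕ → ℝ) (q k : ℕ → ℕ)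
    (hθ0 : θ 0 = 1) (hθ1 : θ 1 = a)
    (hq0 : q 0 = 0) (hq1 : q 1 = 1)
    (hk : ∀ i, (k (i + 1) : ℤ) = ⌊θ i / θ (i + 1)⌋)
    (hθrec : ∀ i, θ (i + 2) = θ i - (k (i + 1) : ℝ) * θ (i + 1))
    (hqrec : ∀ i, q (i + 2) = q i + k (i + 1) * q (i + 1))
    (b : ℝ) (hb0 : 0 ≤ b) (hb1 : b < 1)
    (i : ℕ) (hi : Even i) (t : ℕ) (ht : t < k (i + 1))
    (n : ℕ) (hn : n = q (i + 1) + (q i + t * q (i + 1))) :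
    (dLeft a b n < θ (i + 1) → dLeft a b (n + q (i + 1)) = dLeft a b n) ∧
    (θ (i + 1) ≤ dLeft a b n → dLeft a b (n + q (i + 1)) = dLeft a b n - θ (i + 1)) := by
  obtain ⟨h0, h1, P, P', e0, e1, hd⟩ :=
    theta_inv a ha0 hirr θ q k hθ0 hθ1 hq0 hq1 hk hθrec hqrec (i + 1)
  have hodd : Odd (i + 1) := hi.add_one
  rw [hodd.neg_one_pow] at e0 e1 hd
  have hkey : ∀ m l : ℤ, 0 < m → m < n + q (i + 1) → 0 ≤ a * m - l →
      θ (i + 1) ≤ a * m - l := by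
    intro m l hm hm2 hs
    refine best_approx a (θ (i + 1)) (θ (i + 2)) (q (i + 1)) (q (i + 2)) P P' h0 h1
      (by rw [e0]; ring) (by rw [e1]; ring) (by linarith) m l hm ?_ hs
    refine lt_of_lt_of_le hm2 ?_
    have : n + q (i + 1) ≤ q (i + 1) + q (i + 2) := by
      rw [hn, hqrec]; nlinarith
    exact_mod_cast this
  have hqa : (q (i + 1) : ℝ) * a = θ (i + 1) + P := by rw [e0]; ring
  rcases Nat.eq_zero_or_pos n with hn0 | hnpos
  · exfalso
    have hq1' : q (i + 1) = 0 := by omega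
    have hq0' : q i = 0 := by omega
    have := hqrec i
    rw [hq1', hq0'] at this
    rw [hq1', this] at hd
    simp at hd
  obtain ⟨z, hz, hzd, hzmin⟩ := dLeft_spec a b n hnpos
  obtain ⟨w, hw, hwd, hwmin⟩ := dLeft_spec a b (n + q (i + 1)) (by omega)
  constructor
  · intro hD
    apply le_antisymm
    · rw [hzd]; exact hwmin z (by omega)
    · by_contra hlt
      push Not at hlt
      have hwn : n ≤ w := by
        by_contra h
        have := hzmin w (by omega)
        linarith
      rw [hwd, hzd] at hlt
      rw [hzd] at hD
      have hnn := Int.fract_nonneg (b - a * w)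
      have h2 := Int.self_sub_floor (b - a * w)
      have h3 := Int.self_sub_floor (b - a * z)
      have := hkey ((w : ℤ) - z) (⌊b - a * z⌋ - ⌊b - a * w⌋) (by omega) (by omega)
        (by push_cast; linarith)
      push_cast at this
      linarith
  · intro hD
    have hshift : ∀ y : ℕ, θ (i + 1) ≤ Int.fract (b - a * y) →
        Int.fract (b - a * ((y + q (i + 1) : ℕ) : ℝ)) = Int.fract (b - a * y) - θ (i + 1) := by
      intro y hy
      rw [Int.fract_eq_iff]
      refine ⟨by linarith, by linarith [Int.fract_lt_one (b - a * y)], ⌊b - a * y⌋ - P, ?_⟩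
      have h3 := Int.self_sub_floor (b - a * y)
      push_cast
      linarith
    apply le_antisymm
    · have := hwmin (z + q (i + 1)) (by omega)
      rw [hshift z (hzd ▸ hD)] at this
      rw [hzd]; exact this
    · rcases lt_or_ge w n with h | h
      · have := hzmin w h
        rw [hwd]; linarith
      · obtain ⟨y, rfl⟩ : ∃ y, w = y + q (i + 1) := ⟨w - q (i + 1), by
          have : q (i + 1) ≤ n := by rw [hn]; omega
          omega⟩
        have hy := hzmin y (by omega)
        rw [hwd, hshift y (by linarith)]
        linarith
end

section
/- Distance update for the subtraction-based step, odd case: let b ∈ [0,1), let i ≥ 0 be odd, let t ≥ 0 with t + 1 < k_{i+1}, and set n = q_i + q_{i−1,t}. Then d_{n+q_i}(b) = d_n(b) if d_n(b) < θ_{i−1,t} − θ_i, and d_{n+q_i}(b) = d_n(b) − (θ_{i−1,t} − θ_i) otherwise. -/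
theorem dLeft_le (a b : ℝ) (n x : ℕ) (hx : x < n) : dLeft a b n ≤ Int.fract (b - a * x) := by
  apply csInf_le
  · refine ⟨0, ?_⟩
    rintro y ⟨x, -, rfl⟩
    exact Int.fract_nonneg _
  · exact ⟨x, hx, rfl⟩

theorem dLeft_attained (a b : ℝ) (n : ℕ) (hn : 0 < n) :
    ∃ x : ℕ, x < n ∧ dLeft a b n = Int.fract (b - a * x) := by
  have hne : {y : ℝ | ∃ x : ℕ, x < n ∧ y = Int.fract (b - a * x)}.Nonempty := ⟨_, 0, hn, rfl⟩
  have hfin : {y : ℝ | ∃ x : ℕ, x < n ∧ y = Int.fract (b - a * x)}.Finite := by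
    refine ((Set.finite_lt_nat n).image (fun x : ℕ => Int.fract (b - a * x))).subset ?_
    rintro y ⟨x, hx, rfl⟩
    exact ⟨x, hx, rfl⟩
  exact hne.csInf_mem hfin

theorem fract_shift (u v c : ℝ) (z : ℤ) (h : v = u - c + z) (h0 : c ≤ Int.fract u)
    (h1 : 0 ≤ c) : Int.fract v = Int.fract u - c := by
  rw [Int.fract_eq_iff]
  refine ⟨by linarith, by linarith [Int.fract_lt_one u], ⌊u⌋ + z, ?_⟩
  have := Int.floor_add_fract u
  push_cast
  linarith

/-- The arithmetic core. -/
theorem core_update (a b θ τ : ℝ) (Q R : ℕ) (P S : ℤ) (hθ : 0 < θ) (hτ : θ < τ - θ)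
    (hτ1 : τ ≤ 1) (hQ : 0 < Q)
    (hP : (Q : ℝ) * a - P = -θ) (hS : (R : ℝ) * a - S = τ) (hdet : P * R - S * Q = 1) :
    (dLeft a b (Q + R) < τ - θ → dLeft a b (Q + R + Q) = dLeft a b (Q + R)) ∧
    (τ - θ ≤ dLeft a b (Q + R) →
      dLeft a b (Q + R + Q) = dLeft a b (Q + R) - (τ - θ)) := by
  obtain ⟨x0, hx0, e0⟩ := dLeft_attained a b (Q + R) (by omega)
  have hmin := dLeft_le a b (Q + R)
  obtain ⟨y0, hy0, f0⟩ := dLeft_attained a b (Q + R + Q) (by omega)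
  have hmin' := dLeft_le a b (Q + R + Q)
  set d := dLeft a b (Q + R)
  set d' := dLeft a b (Q + R + Q)
  have hd0 : 0 ≤ d := by rw [e0]; exact Int.fract_nonneg _
  constructor
  · intro hd
    apply le_antisymm
    · rw [e0]; exact hmin' x0 (by omega)
    · rcases lt_or_ge y0 (Q + R) with h | h
      · rw [f0]; exact hmin y0 h
      obtain ⟨x, rfl⟩ := Nat.exists_eq_add_of_le h
      have hx : x < Q := by omega
      have hfx := hmin x (by omega)
      rcases lt_or_ge (Int.fract (b - a * x)) (τ - θ) with h1 | h1
      · have : d' = Int.fract (b - a * x) - (τ - θ) + 1 := by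
          rw [f0, Int.fract_eq_iff]
          refine ⟨by linarith [Int.fract_nonneg (b - a * x)], by linarith,
            ⌊b - a * x⌋ - (P + S) - 1, ?_⟩
          have := Int.floor_add_fract (b - a * x)
          push_cast
          linarith
        linarith
      · have hnew : d' = Int.fract (b - a * x) - (τ - θ) := by
          rw [f0]
          apply fract_shift _ _ _ (-(P + S)) _ h1 (by linarith)
          push_cast
          linarith
        rw [hnew]
        rcases lt_or_ge (Int.fract (b - a * x)) τ with h2 | h2
        · exfalso
          have g1 := Int.floor_add_fract (b - a * x)
          have g0 := Int.floor_add_fract (b - a * x0)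
          rw [← e0] at g0
          -- m = x0 - x, l
          obtain ⟨m, hm⟩ : ∃ m : ℤ, m = (x0 : ℤ) - x := ⟨_, rfl⟩
          obtain ⟨l, hl⟩ : ∃ l : ℤ, l = ⌊b - a * x⌋ - ⌊b - a * x0⌋ := ⟨_, rfl⟩
          have hmR : (m : ℝ) = x0 - x := by rw [hm]; push_cast; ring
          have hlR : (l : ℝ) = ⌊b - a * x⌋ - ⌊b - a * x0⌋ := by rw [hl]; push_cast; ring
          have hval : (m : ℝ) * a - l = Int.fract (b - a * x) - d := by
            rw [hmR, hlR]; linarith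
          obtain ⟨u, hu⟩ : ∃ u : ℤ, u = R * l - S * m := ⟨_, rfl⟩
          obtain ⟨v, hv⟩ : ∃ v : ℤ, v = P * m - Q * l := ⟨_, rfl⟩
          have hmu : m = u * Q + v * R := by
            rw [hu, hv]; linear_combination (-m) * hdet
          have hlu : l = u * P + v * S := by
            rw [hu, hv]; linear_combination (-l) * hdet
          have hcomb : (m : ℝ) * a - l = -u * θ + v * τ := by
            rw [hmu, hlu]; push_cast
            linear_combination (u : ℝ) * hP + (v : ℝ) * hS
          have hpos : 0 < -(u : ℝ) * θ + v * τ := by rw [← hcomb, hval]; linarith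
          have hlt : -(u : ℝ) * θ + v * τ < τ := by rw [← hcomb, hval]; linarith
          rcases le_or_gt v 0 with hv0 | hv0
          · have hvR : (v : ℝ) ≤ 0 := by exact_mod_cast hv0
            have hu1 : u ≤ -1 := by
              by_contra hcon
              have : (0 : ℝ) ≤ u := by exact_mod_cast (by omega : 0 ≤ u)
              nlinarith
            have : m ≤ -Q := by
              have h1 : v * (R : ℤ) ≤ 0 := mul_nonpos_of_nonpos_of_nonneg hv0 (by positivity)
              nlinarith
            omega
          · have hvR : (1 : ℝ) ≤ v := by exact_mod_cast hv0
            have hu1 : 1 ≤ u := by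
              by_contra hcon
              have : (u : ℝ) ≤ 0 := by exact_mod_cast (by omega : u ≤ 0)
              nlinarith
            have : (Q : ℤ) + R ≤ m := by
              have h1 : (R : ℤ) ≤ v * R := le_mul_of_one_le_left (by positivity) hv0
              have h2 : (Q : ℤ) ≤ u * Q := le_mul_of_one_le_left (by positivity) hu1
              linarith
            omega
        · have hxR := hmin (x + R) (by omega)
          rw [fract_shift (b - a * x) (b - a * ((x + R : ℕ) : ℝ)) τ (-S)
            (by push_cast; linarith) h2 (by linarith)] at hxR
          linarith
  · intro hd
    have hx0Q : x0 < Q := by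
      by_contra hcon
      obtain ⟨x, rfl⟩ := Nat.exists_eq_add_of_le (not_lt.mp hcon)
      have h := hmin x (by omega)
      have := fract_shift (b - a * ((Q + x : ℕ) : ℝ)) (b - a * x) θ P
        (by push_cast; linarith) (by linarith) hθ.le
      linarith
    apply le_antisymm
    · have h := hmin' (Q + R + x0) (by omega)
      rwa [fract_shift (b - a * x0) _ (τ - θ) (-(P + S))
        (by push_cast; linarith) (by linarith) (by linarith), ← e0] at h
    · rcases lt_or_ge y0 (Q + R) with h | h
      · have := hmin y0 h
        linarith
      obtain ⟨x, rfl⟩ := Nat.exists_eq_add_of_le h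
      have h := hmin x (by omega)
      rw [f0, fract_shift (b - a * x) _ (τ - θ) (-(P + S))
        (by push_cast; linarith) (by linarith) (by linarith)]
      linarith

/-- **Distance update for the subtraction-based step, odd case.**
Indexing is shifted by one: `θ (m+1)`, `q (m+1)` denote the mathematical `θ_m`, `q_m`
(so `θ 0 = θ₋₁ = 1`, `θ 1 = θ₀ = a`, `q 0 = q₋₁ = 0`, `q 1 = q₀ = 1`), and `k (i+1) = k_{i+1}`.
For `b ∈ [0,1)`, `i` odd, `t + 1 < k_{i+1}` and `n = q_i + q_{i-1,t}`:
`d_{n+q_i}(b) = d_n(b)` if `d_n(b) < θ_{i-1,t} - θ_i`, and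
`d_{n+q_i}(b) = d_n(b) - (θ_{i-1,t} - θ_i)` otherwise. -/
theorem distance_update_subtractive_odd (a : ℝ) (ha0 : 0 < a) (ha1 : a < 1)
    (hirr : Irrational a)
    (θ : ℕ → ℝ) (q k : ℕ → ℕ)
    (hθ0 : θ 0 = 1) (hθ1 : θ 1 = a)
    (hq0 : q 0 = 0) (hq1 : q 1 = 1)
    (hk : ∀ i, (k (i + 1) : ℤ) = ⌊θ i / θ (i + 1)⌋)
    (hθrec : ∀ i, θ (i + 2) = θ i - (k (i + 1) : ℝ) * θ (i + 1))
    (hqrec : ∀ i, q (i + 2) = q i + k (i + 1) * q (i + 1))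
    (b : ℝ) (hb0 : 0 ≤ b) (hb1 : b < 1)
    (i : ℕ) (hi : Odd i) (t : ℕ) (ht : t + 1 < k (i + 1))
    (n : ℕ) (hn : n = q (i + 1) + (q i + t * q (i + 1))) :
    (dLeft a b n < θ i - (t : ℝ) * θ (i + 1) - θ (i + 1) →
      dLeft a b (n + q (i + 1)) = dLeft a b n) ∧
    (θ i - (t : ℝ) * θ (i + 1) - θ (i + 1) ≤ dLeft a b n →
      dLeft a b (n + q (i + 1)) = dLeft a b n - (θ i - (t : ℝ) * θ (i + 1) - θ (i + 1))) := by
  have inv : ∀ j, ∃ P S : ℤ, (q j : ℝ) * a - S = -(-1) ^ j * θ j ∧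
      (q (j + 1) : ℝ) * a - P = (-1) ^ j * θ (j + 1) ∧
      P * q j - S * q (j + 1) = -(-1) ^ j ∧ 0 < θ (j + 1) ∧ θ (j + 1) < θ j ∧ θ j ≤ 1 ∧
      0 < q (j + 1) := by
    intro j
    induction j with
    | zero => exact ⟨0, 1, by simp [hq0, hθ0], by simp [hq1, hθ1], by simp [hq0, hq1],
        by simpa [hθ1] using ha0, by simpa [hθ0, hθ1] using ha1, by simp [hθ0], by simp [hq1]⟩
    | succ j ih =>
      obtain ⟨P, S, h1, h2, h3, h4, h5, h6, h7⟩ := ih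
      have hkj := hk j
      have hk1 : 1 ≤ k (j + 1) := by
        have : (1 : ℤ) ≤ ⌊θ j / θ (j + 1)⌋ := by
          rw [Int.le_floor, le_div_iff₀ h4]; push_cast; linarith
        omega
      have hkR : (k (j + 1) : ℝ) = (⌊θ j / θ (j + 1)⌋ : ℝ) := by exact_mod_cast hkj
      have hle : (k (j + 1) : ℝ) * θ (j + 1) ≤ θ j := by
        rw [← le_div_iff₀ h4, hkR]; exact Int.floor_le _
      have hlt : θ j < ((k (j + 1) : ℝ) + 1) * θ (j + 1) := by
        rw [← div_lt_iff₀ h4, hkR]; exact Int.lt_floor_add_one _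
      have hqpos : 0 < q (j + 2) := by
        rw [hqrec]; exact Nat.add_pos_right _ (Nat.mul_pos hk1 h7)
      have hnew : (q (j + 2) : ℝ) * a - ((S + k (j + 1) * P : ℤ) : ℝ)
          = (-1) ^ (j + 1) * θ (j + 2) := by
        rw [hqrec, hθrec, pow_succ]; push_cast
        linear_combination h1 + (k (j + 1) : ℝ) * h2
      refine ⟨S + k (j + 1) * P, P, ?_, hnew, ?_, ?_, ?_, by linarith, hqpos⟩
      · rw [h2, pow_succ]; ring
      · rw [show j + 1 + 1 = j + 2 from rfl, hqrec, pow_succ]; push_cast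
        linear_combination -h3
      · have h0 : 0 ≤ θ (j + 2) := by rw [hθrec]; linarith
        rcases h0.lt_or_eq with h | h
        · exact h
        · exfalso
          rw [← h, mul_zero] at hnew
          have hqR : (0 : ℝ) < q (j + 2) := by exact_mod_cast hqpos
          apply hirr
          refine ⟨((S + k (j + 1) * P : ℤ) : ℚ) / (q (j + 2) : ℚ), ?_⟩
          push_cast at hnew ⊢
          rw [div_eq_iff hqR.ne']
          linarith
      · rw [show j + 1 + 1 = j + 2 from rfl, hθrec]; linarith
  obtain ⟨P, S, h1, h2, h3, h4, h5, h6, h7⟩ := inv i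
  obtain ⟨-, -, -, -, -, h8, -, -, -⟩ := inv (i + 1)
  rw [hi.neg_one_pow] at h1 h2 h3
  have hr := hθrec i
  rw [show i + 1 + 1 = i + 2 from rfl, hr] at h8
  have htR : (t : ℝ) + 2 ≤ k (i + 1) := by exact_mod_cast ht
  have ht0 : (0 : ℝ) ≤ t := by positivity
  subst hn
  have hprod : ((t : ℝ) + 2) * θ (i + 1) ≤ k (i + 1) * θ (i + 1) :=
    mul_le_mul_of_nonneg_right htR h4.le
  have htp : 0 ≤ (t : ℝ) * θ (i + 1) := mul_nonneg ht0 h4.le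
  apply core_update a b (θ (i + 1)) (θ i - (t : ℝ) * θ (i + 1)) (q (i + 1))
    (q i + t * q (i + 1)) P (S + t * P) h4 (by linarith) (by linarith) h7
  · linarith
  · push_cast
    linear_combination h1 + (t : ℝ) * h2
  · push_cast
    linear_combination h3
end
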